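/- Let r ≥ 5 be a prime and q an odd prime, and let z, s be nonzero integers satisfying (I): v_q(z) = 1 and (II): v_q(s) ≥ (r+1)/2. Then for every pair of distinct roots γ, γ′ of F(x) = (−z)^((r−1)/2)·x·h(2 − x²/z) + s in an algebraic closure of ℚ_q, one has v_q(γ − γ′) = 1/2 if q ≠ r, and v_q(γ − γ′) = 1/(r−1) + 1/2 if q = r, where v_q is the unique extension of the q-adic valuation normalized by v_q(q) = 1. In particular all pairwise differences of roots have the same valuation. -/

import Mathlib

open Polynomial

/-- `h` is the minimal polynomial (over `ℤ`) of `ζ_r + ζ_r⁻¹`, where `ζ_r = exp(2πi/r)`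
is a primitive `r`-th root of unity. -/
noncomputable def hpoly (r : ℕ) : Polynomial ℤ :=
  minpoly ℤ (Complex.exp (2 * Real.pi * Complex.I / (r : ℂ)) +
    (Complex.exp (2 * Real.pi * Complex.I / (r : ℂ)))⁻¹)

/-- The polynomial `F(x) = (-z)^((r-1)/2) · x · h(2 - x²/z) + s`, over a field `K`. -/
noncomputable def Fpoly (r : ℕ) (z s : ℤ) (K : Type*) [Field K] : Polynomial K :=
  C ((((-z) ^ ((r - 1) / 2) : ℤ) : K)) * X *
    (((hpoly r).map (Int.castRingHom K)).comp (C 2 - C ((z : K))⁻¹ * X ^ 2)) + C ((s : K))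

/-- `v` is (the additive form of) the unique extension to the algebraic closure of `ℚ_q` of
the `q`-adic valuation, normalized so that `v q = 1`. -/
def IsValuationExt (q : ℕ) [Fact q.Prime] (v : AlgebraicClosure ℚ_[q] → ℚ) : Prop :=
  (∀ x y : AlgebraicClosure ℚ_[q], x ≠ 0 → y ≠ 0 → v (x * y) = v x + v y) ∧
  (∀ x y : AlgebraicClosure ℚ_[q], x ≠ 0 → y ≠ 0 → x + y ≠ 0 →
    min (v x) (v y) ≤ v (x + y)) ∧
  (∀ x : ℚ_[q], x ≠ 0 →
    v (algebraMap ℚ_[q] (AlgebraicClosure ℚ_[q]) x) = (x.valuation : ℚ))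

noncomputable def gp : ℕ → Polynomial ℤ
  | 0 => 1
  | 1 => X + 1
  | (n+2) => X * gp (n+1) - gp n

lemma gp_aux (n : ℕ) : (gp n).Monic ∧ (gp n).natDegree = n ∧
    (gp (n+1)).Monic ∧ (gp (n+1)).natDegree = n + 1 := by
  induction n with
  | zero =>
    refine ⟨by simp [gp], by simp [gp], ?_, ?_⟩
    · simpa [gp] using monic_X_add_C (1 : ℤ)
    · simpa [gp] using natDegree_X_add_C (1 : ℤ)
  | succ n ih =>
    obtain ⟨h1, h2, h3, h4⟩ := ih
    have hX : (X * gp (n+1)).Monic := monic_X.mul h3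
    have hXd : (X * gp (n+1)).natDegree = n + 2 := by
      rw [monic_X.natDegree_mul h3, h4, natDegree_X]; ring
    have hlt : (gp n).degree < (X * gp (n+1)).degree := by
      apply degree_lt_degree
      rw [hXd, h2]; omega
    refine ⟨h3, h4, ?_, ?_⟩
    · exact hX.sub_of_left hlt
    · change (X * gp (n+1) - gp n).natDegree = n + 2
      rw [natDegree_sub_eq_left_of_natDegree_lt, hXd]
      rw [hXd, h2]; omega

lemma gp_eval {K : Type*} [Field K] (y : K) (hy : y ≠ 0) (n : ℕ) :
    ((y - 1) * (aeval (y + y⁻¹) (gp n)) * y ^ n = y ^ (2*n+1) - 1) ∧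
    ((y - 1) * (aeval (y + y⁻¹) (gp (n+1))) * y ^ (n+1) = y ^ (2*(n+1)+1) - 1) := by
  induction n with
  | zero => 
    constructor
    · simp [gp]
    · simp [gp]; field_simp; ring
  | succ n ih =>
    obtain ⟨h1, h2⟩ := ih
    refine ⟨h2, ?_⟩
    have : gp (n+1+1) = X * gp (n+1) - gp n := rfl
    rw [this]
    simp only [map_sub, map_mul, aeval_X]
    have e : (y - 1) * ((y + y⁻¹) * (aeval (y + y⁻¹)) (gp (n + 1)) - (aeval (y + y⁻¹)) (gp n)) * y ^ (n + 1 + 1)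
      = (y^2 + 1) * ((y - 1) * (aeval (y + y⁻¹) (gp (n+1))) * y ^ (n+1)) - y^2 * ((y - 1) * (aeval (y + y⁻¹) (gp n)) * y ^ n) := by
      generalize (aeval (y + y⁻¹)) (gp (n + 1)) = A
      generalize (aeval (y + y⁻¹)) (gp n) = B
      field_simp
      ring
    rw [e, h1, h2]; ring

lemma hpoly_eq (r : ℕ) [hrp : Fact r.Prime] (n : ℕ) (hn : r = 2 * n + 1) : hpoly r = gp n := by
  have hr0 : r ≠ 0 := hrp.1.ne_zero
  have hprim := Complex.isPrimitiveRoot_exp r hr0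
  unfold hpoly
  set ζ := Complex.exp (2 * Real.pi * Complex.I / (r : ℂ)) with hζ
  have hζ0 : ζ ≠ 0 := hprim.ne_zero hr0
  have hg0 : aeval (ζ + ζ⁻¹) (gp n) = 0 := by
    have := (gp_eval ζ hζ0 n).1
    rw [← hn, hprim.pow_eq_one, sub_self] at this
    have h1 : ζ - 1 ≠ 0 := sub_ne_zero.2 (hprim.ne_one hrp.1.one_lt)
    simpa [h1, hζ0] using this
  obtain ⟨hm, hd, -, -⟩ := gp_aux n
  have hint : IsIntegral ℤ (ζ + ζ⁻¹) := ⟨gp n, hm, by simpa [aeval_def] using hg0⟩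
  have hmm := minpoly.monic hint
  have hdvd := minpoly.isIntegrallyClosed_dvd hint hg0
  set h := minpoly ℤ (ζ + ζ⁻¹) with hh
  have hz : aeval (ζ + ζ⁻¹) h = 0 := minpoly.aeval _ _
  refine (eq_of_monic_of_dvd_of_natDegree_le hmm hm hdvd ?_).symm
  rw [hd]
  -- the polynomial Y^d h(Y+1/Y)
  set P : ℤ[X] := ∑ i ∈ Finset.range (h.natDegree + 1), C (h.coeff i) * (X ^ (h.natDegree - i) * (X^2+1)^i) with hP
  have hPz : aeval ζ P = 0 := by
    have : aeval ζ P = ζ ^ h.natDegree * aeval (ζ + ζ⁻¹) h := by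
      rw [hP, aeval_eq_sum_range (p := h), map_sum, Finset.mul_sum]
      refine Finset.sum_congr rfl fun i hi => ?_
      have hi' : i ≤ h.natDegree := by simpa [Nat.lt_succ_iff] using hi
      have e1 : ζ ^ h.natDegree = ζ ^ (h.natDegree - i) * ζ ^ i := by
        rw [← pow_add]; congr 1; omega
      have e2 : ζ ^ 2 + 1 = ζ * (ζ + ζ⁻¹) := by field_simp
      simp only [map_mul, map_pow, map_add, aeval_X, map_one, e1, e2, mul_pow, zsmul_eq_mul, eq_intCast, map_intCast]
      ring
    rw [this, hz, mul_zero]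
  have hXm : ((X : ℤ[X])^2+1).Monic := by simpa using monic_X_pow_add_C (1:ℤ) (two_ne_zero)
  have hXd : ((X : ℤ[X])^2+1).natDegree = 2 := by simpa using natDegree_X_pow_add_C (n := 2) (r := (1:ℤ))
  have hPc : P.coeff (2 * h.natDegree) = 1 := by
    rw [hP, finsetSum_coeff, Finset.sum_range_succ, Finset.sum_eq_zero]
    · have := (hXm.pow h.natDegree).coeff_natDegree
      rw [hXm.natDegree_pow, hXd, mul_comm] at this
      simp [hmm.coeff_natDegree, this]
    · intro i hi
      have hi' : i < h.natDegree := by simpa using hi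
      rw [coeff_C_mul, coeff_eq_zero_of_natDegree_lt (p := X ^ (h.natDegree - i) * (X ^ 2 + 1) ^ i), mul_zero]
      rw [(monic_X_pow _).natDegree_mul (hXm.pow _), natDegree_X_pow, hXm.natDegree_pow, hXd]
      omega
  have hP0 : P ≠ 0 := by rintro h0; rw [h0] at hPc; simp at hPc
  have hPd : P.natDegree ≤ 2 * h.natDegree := by
    refine natDegree_sum_le_of_forall_le _ _ fun i hi => ?_
    have hi' : i ≤ h.natDegree := by simpa [Nat.lt_succ_iff] using hi
    refine (natDegree_C_mul_le _ _).trans ?_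
    rw [(monic_X_pow _).natDegree_mul (hXm.pow _), natDegree_X_pow, hXm.natDegree_pow, hXd]
    omega
  have hcd : cyclotomic r ℤ ∣ P := by
    rw [cyclotomic_eq_minpoly hprim hrp.1.pos]
    exact minpoly.isIntegrallyClosed_dvd (hprim.isIntegral hrp.1.pos) hPz
  have := natDegree_le_of_dvd hcd hP0
  rw [natDegree_cyclotomic, Nat.totient_prime hrp.1] at this
  omega

section
variable {K : Type*} [Field K] (V : AddValuation K (WithTop ℚ))

lemma V_pow_sub {x y : K} (hx : 0 ≤ V x) (hy : 0 ≤ V y) (n : ℕ) : V (x - y) ≤ V (x ^ n - y ^ n) := by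
  induction n with
  | zero => simp
  | succ n ih =>
    have e : x ^ (n+1) - y ^ (n+1) = x * (x ^ n - y ^ n) + (x - y) * y ^ n := by ring
    rw [e]
    refine V.map_le_add ?_ ?_
    · rw [V.map_mul]
      exact ih.trans (le_add_of_nonneg_left hx)
    · rw [V.map_mul, V.map_pow]
      exact le_add_of_nonneg_right (nsmul_nonneg hy n)

lemma V_one_sub_root {r : ℕ} (hr : r.Prime) {ζ : K} (hζ : IsPrimitiveRoot ζ r)
    (hV : V ζ = 0) : (r - 1) • V (1 - ζ) = V (r : K) := by
  have hr1 : r - 1 + 1 = r := Nat.sub_add_cancel hr.one_lt.le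
  rw [← hr1] at hζ
  have hp := hζ.prod_one_sub_pow_eq_order
  have hcast : (r : K) = ((r - 1 : ℕ) : K) + 1 := by exact_mod_cast congrArg (Nat.cast (R := K)) hr1.symm
  rw [hcast, ← hp]
  rw [hr1] at hζ
  have hpr : ∀ (s : Finset ℕ) (f : ℕ → K), V (∏ i ∈ s, f i) = ∑ i ∈ s, V (f i) := by
    intro s f
    induction s using Finset.cons_induction with
    | empty => simp
    | cons a s ha ih => rw [Finset.prod_cons, Finset.sum_cons, V.map_mul, ih]
  rw [hpr, Finset.sum_congr rfl (g := fun _ => V (1 - ζ)), Finset.sum_const, Finset.card_range]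
  intro k hk
  have hk' : k + 1 < r := by have := Finset.mem_range.1 hk; omega
  have hcop : Nat.Coprime (k+1) r := ((hr.coprime_iff_not_dvd.2 (Nat.not_dvd_of_pos_of_lt (Nat.succ_pos k) hk')).symm)
  apply le_antisymm
  · obtain ⟨m, -, hm⟩ := Nat.exists_mul_mod_eq_one_of_coprime hcop hr.one_lt
    have h1 : (ζ ^ (k+1)) ^ m = ζ := by
      rw [← pow_mul, ← Nat.div_add_mod ((k+1)*m) r, hm, pow_add, pow_mul, hζ.pow_eq_one]; simp
    have := V_pow_sub V (x := 1) (y := ζ ^ (k+1)) (by simp) (by simp [V.map_pow, hV]) m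
    rwa [h1, one_pow] at this
  · have := V_pow_sub V (x := 1) (y := ζ) (by simp) (by simp [hV]) (k+1)
    simpa using this

/-- a unit solution of `T - 1/T = c`. -/
lemma V_unit {T c : K} (hT : T * (T - c) = 1) (hc : 0 < V c) : V T = 0 := by
  have h1 : V T + V (T - c) = 0 := by rw [← V.map_mul, hT, V.map_one]
  rcases lt_trichotomy (V T) 0 with h | h | h
  · have h2 : V (T - c) = V T := V.map_sub_eq_of_lt_left (h.trans hc)
    rw [h2] at h1
    have := nsmul_neg h two_ne_zero
    rw [two_nsmul, h1] at this
    exact absurd this (lt_irrefl _)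
  · exact h
  · have h2 : 0 < V (T - c) := lt_of_lt_of_le (lt_min h hc) (V.map_sub _ _)
    have := add_pos_of_pos_of_nonneg h h2.le
    rw [h1] at this
    exact absurd this (lt_irrefl _)

lemma V_last {T c u : K} {r : ℕ} (hodd : Odd r) (hT : T * (T - c) = 1) (hc : 0 < V c)
    (hu : u ^ r = T ^ 2) (hVu : V u = 0) (h2 : V 2 = 0) : V (u + 1) = 0 := by
  have hVT := V_unit V hT hc
  by_contra hne
  have h0 : 0 ≤ V (u + 1) := V.map_le_add hVu.ge (by simp)
  have hpos : 0 < V (u + 1) := lt_of_le_of_ne h0 (Ne.symm hne)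
  have h3 := V_pow_sub V (x := u) (y := -1) hVu.ge (by simp) r
  rw [hodd.neg_one_pow, hu, sub_neg_eq_add, sub_neg_eq_add] at h3
  have h4 : V (T ^ 2 - 1) = V c := by
    have : T ^ 2 - 1 = c * T := by linear_combination hT
    rw [this, V.map_mul, hVT, add_zero]
  have h5 : (2 : K) = (T ^ 2 + 1) - (T ^ 2 - 1) := by ring
  have h6 : 0 < V 2 := by
    rw [h5]
    exact lt_of_lt_of_le (lt_min (hpos.trans_le h3) (h4 ▸ hc)) (V.map_sub _ _)
  exact absurd h2 h6.ne'

/-- The core computation: difference of two parametrised roots with the same `T`. -/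
lemma V_core {a b w T c : K} {r : ℕ} (hr : r.Prime) (hodd : Odd r) (ha0 : a ≠ 0) (hb0 : b ≠ 0)
    (ha : a ^ r = T) (hb : b ^ r = T) (hT : T * (T - c) = 1) (hc : 0 < V c) (h2 : V 2 = 0)
    (hab : a ≠ b) : ∃ d : WithTop ℚ, (r - 1) • d = V (r : K) ∧
      V (w * (a - a⁻¹) - w * (b - b⁻¹)) = V w + d := by
  have hVT := V_unit V hT hc
  have hT0 : T ≠ 0 := by rintro rfl; simp at hT
  have root : ∀ x : K, V (x ^ r) = 0 → V x = 0 := by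
    intro x hx
    rw [V.map_pow] at hx
    rcases lt_trichotomy (V x) 0 with h | h | h
    · exact absurd hx (nsmul_neg h hr.ne_zero).ne
    · exact h
    · exact absurd hx (nsmul_pos h hr.ne_zero).ne'
  have hVa : V a = 0 := root a (by rw [ha, hVT])
  have hVb : V b = 0 := root b (by rw [hb, hVT])
  set ζ := b / a with hζ
  have hζr : ζ ^ r = 1 := by rw [hζ, div_pow, ha, hb, div_self hT0]
  have hζ1 : ζ ≠ 1 := by
    intro h; rw [hζ, div_eq_one_iff_eq ha0] at h; exact hab h.symm
  have := Fact.mk hr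
  have hprim : IsPrimitiveRoot ζ r := by
    rw [← orderOf_eq_prime hζr hζ1]; exact IsPrimitiveRoot.orderOf ζ
  have hVζ : V ζ = 0 := root ζ (by rw [hζr]; simp)
  refine ⟨V (1 - ζ), V_one_sub_root V hr hprim hVζ, ?_⟩
  have hVl : V (a * b + 1) = 0 := V_last V (r := r) (u := a * b) hodd hT hc
    (by rw [mul_pow, ha, hb, sq]) (by rw [V.map_mul, hVa, hVb, add_zero]) h2
  have e : (w * (a - a⁻¹) - w * (b - b⁻¹)) * b = w * (1 - ζ) * (a * b + 1) := by
    rw [hζ]; field_simp; ring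
  have := congrArg V e
  rwa [V.map_mul, V.map_mul, V.map_mul, hVb, hVl, add_zero, add_zero] at this
end

lemma exists_param {K : Type*} [Field K] [IsAlgClosed K] (t : K) : ∃ a : K, a ≠ 0 ∧ a - a⁻¹ = t := by
  obtain ⟨a, ha⟩ := IsAlgClosed.exists_root (X ^ 2 - C t * X - 1 : K[X]) (by
    have : (X ^ 2 - C t * X - 1 : K[X]).degree = 2 := by compute_degree!
    rw [this]; decide)
  have ha' : a ^ 2 - t * a - 1 = 0 := by simpa using ha
  have h0 : a ≠ 0 := by rintro rfl; simp at ha'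
  refine ⟨a, h0, ?_⟩
  field_simp
  linear_combination ha'

lemma F_param {k K : Type*} [Field k] [Field K] [CharZero k] [Algebra k K] (r : ℕ) [Fact r.Prime] (n : ℕ) (hn : r = 2 * n + 1)
    (z s : ℤ) (hz0 : z ≠ 0) (w a : K) (hw : w ^ 2 = -(z : K)) (ha0 : a ≠ 0)
    (h : aeval (w * (a - a⁻¹)) (Fpoly r z s k) = 0) :
    w ^ r * (a ^ r - (a ^ r)⁻¹) = - (s : K) := by
  have : CharZero K := charZero_of_injective_algebraMap (algebraMap k K).injective
  have hzK : (z : K) ≠ 0 := by exact_mod_cast hz0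
  unfold Fpoly at h
  rw [hpoly_eq r n hn] at h
  have hn2 : (r - 1) / 2 = n := by omega
  have e : (2 : K) - (z : K)⁻¹ * (w * (a - a⁻¹)) ^ 2 = a ^ 2 + (a ^ 2)⁻¹ := by
    rw [mul_pow, hw]; field_simp; ring
  simp only [map_add, map_mul, aeval_C, aeval_X, aeval_comp, map_sub, map_pow, map_inv₀, map_intCast, hn2, Int.cast_pow, Int.cast_neg, map_neg, map_ofNat, e] at h
  have hmap : aeval (a ^ 2 + (a ^ 2)⁻¹) ((gp n).map (Int.castRingHom k)) = aeval (a ^ 2 + (a ^ 2)⁻¹) (gp n) := by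
    have := aeval_map_algebraMap (R := ℤ) k (a ^ 2 + (a ^ 2)⁻¹) (gp n)
    simpa using this
  rw [hmap] at h
  have hg := (gp_eval (a ^ 2) (pow_ne_zero 2 ha0) n).1
  set G := aeval (a ^ 2 + (a ^ 2)⁻¹) (gp n)
  have hG : (a - a⁻¹) * G = a ^ r - (a ^ r)⁻¹ := by
    have h3 : a ^ (2 * n + 1) ≠ 0 := pow_ne_zero _ ha0
    rw [hn]
    apply mul_right_cancel₀ h3
    rw [sub_mul (a ^ (2 * n + 1)), inv_mul_cancel₀ h3]
    have : (a - a⁻¹) * G * a ^ (2 * n + 1) = (a ^ 2 - 1) * G * (a ^ 2) ^ n := by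
      rw [← pow_mul]; field_simp; ring
    rw [this, hg]; ring
  rw [← hG, hn, pow_succ, pow_mul, hw]
  linear_combination h

noncomputable def toAddVal {K : Type*} [Field K] (v : K → ℚ)
    (h1 : ∀ x y : K, x ≠ 0 → y ≠ 0 → v (x * y) = v x + v y)
    (h2 : ∀ x y : K, x ≠ 0 → y ≠ 0 → x + y ≠ 0 → min (v x) (v y) ≤ v (x + y)) :
    AddValuation K (WithTop ℚ) :=
  open Classical in
  AddValuation.of (fun x => if x = 0 then ⊤ else ((v x : ℚ) : WithTop ℚ)) (by simp)
    (by
      have := h1 1 1 one_ne_zero one_ne_zero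
      have h : v 1 = 0 := by rw [mul_one] at this; linarith
      simp [h])
    (by
      intro x y
      by_cases hx : x = 0
      · rw [show x + y = y by rw [hx, zero_add]]; exact min_le_right _ _
      by_cases hy : y = 0
      · rw [show x + y = x by rw [hy, add_zero]]; exact min_le_left _ _
      by_cases hxy : x + y = 0
      · simp [hxy]
      simp only [hx, hy, hxy, if_false]
      exact_mod_cast h2 x y hx hy hxy)
    (by
      intro x y
      by_cases hx : x = 0
      · simp [hx]
      by_cases hy : y = 0
      · simp [hy]
      simp [hx, hy, h1 x y hx hy])

lemma toAddVal_apply {K : Type*} [Field K] (v : K → ℚ) (h1) (h2) (x : K) (hx : x ≠ 0) :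
    toAddVal v h1 h2 x = ((v x : ℚ) : WithTop ℚ) := by
  simp [toAddVal, AddValuation.of_apply, hx]

theorem stmt_6 (r q : ℕ) [Fact r.Prime] [Fact q.Prime] (hr : 5 ≤ r) (hqodd : Odd q)
    (z s : ℤ) (hz0 : z ≠ 0) (hs0 : s ≠ 0)
    (hz : ((z : ℚ_[q])).valuation = 1)
    (hs : (r : ℤ) + 1 ≤ 2 * ((s : ℚ_[q])).valuation)
    (v : AlgebraicClosure ℚ_[q] → ℚ) (hv : IsValuationExt q v)
    (γ γ' : AlgebraicClosure ℚ_[q])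
    (hγ : aeval γ (Fpoly r z s ℚ_[q]) = 0) (hγ' : aeval γ' (Fpoly r z s ℚ_[q]) = 0)
    (hne : γ ≠ γ') :
    v (γ - γ') = if q = r then 1 / ((r : ℚ) - 1) + 1 / 2 else 1 / 2 := by
  have hrp : r.Prime := Fact.out
  have hqp : q.Prime := Fact.out
  have hodd : Odd r := hrp.odd_of_ne_two (by omega)
  obtain ⟨n, hn⟩ := hodd
  have hodd : Odd r := ⟨n, hn⟩
  obtain ⟨h1, h2, h3⟩ := hv
  set V := toAddVal v h1 h2 with hVdef
  have hV : ∀ x, x ≠ 0 → V x = ((v x : ℚ) : WithTop ℚ) := toAddVal_apply v h1 h2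
  have : CharZero (AlgebraicClosure ℚ_[q]) := charZero_of_injective_algebraMap (algebraMap ℚ_[q] _).injective
  have hzK : (z : AlgebraicClosure ℚ_[q]) ≠ 0 := by exact_mod_cast hz0
  have hsK : (s : AlgebraicClosure ℚ_[q]) ≠ 0 := by exact_mod_cast hs0
  have hvz : v (z : AlgebraicClosure ℚ_[q]) = 1 := by
    have := h3 (z : ℚ_[q]) (by exact_mod_cast hz0)
    rw [hz] at this
    simpa using this
  have hvs : ((r : ℚ) + 1) / 2 ≤ v (s : AlgebraicClosure ℚ_[q]) := by
    have := h3 (s : ℚ_[q]) (by exact_mod_cast hs0)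
    rw [map_intCast] at this
    rw [this]
    have : ((r : ℚ) + 1) ≤ 2 * (((s : ℚ_[q]).valuation : ℤ) : ℚ) := by exact_mod_cast hs
    linarith
  have hvnat : ∀ m : ℕ, m ≠ 0 → v (m : AlgebraicClosure ℚ_[q]) = (padicValNat q m : ℚ) := by
    intro m hm
    have := h3 (m : ℚ_[q]) (by exact_mod_cast hm)
    rw [map_natCast, Padic.valuation_natCast] at this
    simpa using this
  have hV2 : V 2 = 0 := by
    rw [hV 2 two_ne_zero]
    have := hvnat 2 (by norm_num)
    rw [padicValNat.eq_zero_of_not_dvd (fun hd => by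
      have := (Nat.prime_dvd_prime_iff_eq hqp Nat.prime_two).1 hd
      rw [this] at hqodd; exact absurd hqodd (by decide))] at this
    have h' : v 2 = 0 := by simpa using this
    rw [h']; rfl
  obtain ⟨w, hw⟩ := IsAlgClosed.exists_pow_nat_eq (-(z : AlgebraicClosure ℚ_[q])) (n := 2) (by norm_num)
  have hw0 : w ≠ 0 := by
    rintro rfl
    simp at hw; exact hz0 hw
  have hvw : v w = 1 / 2 := by
    have e1 : V (w ^ 2) = V (z : AlgebraicClosure ℚ_[q]) := by rw [hw, V.map_neg]
    rw [hV _ (pow_ne_zero 2 hw0), hV _ hzK, hvz] at e1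
    have e2 : v (w ^ 2) = 1 := by exact_mod_cast e1
    rw [sq, h1 w w hw0 hw0] at e2
    linarith
  have hVwr : V (w ^ r) = (((r : ℚ) / 2 : ℚ) : WithTop ℚ) := by
    rw [V.map_pow, hV w hw0, hvw, ← WithTop.coe_nsmul]
    congr 1
    rw [nsmul_eq_mul]; ring
  set c : AlgebraicClosure ℚ_[q] := - (s : AlgebraicClosure ℚ_[q]) / w ^ r with hcdef
  have hwr0 : w ^ r ≠ 0 := pow_ne_zero r hw0
  have hc : 0 < V c := by
    have e : V c + V (w ^ r) = V (s : AlgebraicClosure ℚ_[q]) := by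
      rw [← V.map_mul, hcdef, div_mul_cancel₀ _ hwr0, V.map_neg]
    have hc0 : c ≠ 0 := div_ne_zero (neg_ne_zero.2 hsK) hwr0
    rw [hVwr, hV _ hsK, hV c hc0] at e
    rw [hV c hc0]
    have e' : v c + (r : ℚ) / 2 = v (s : AlgebraicClosure ℚ_[q]) := by exact_mod_cast e
    have : 0 < v c := by linarith
    exact_mod_cast this
  have par : ∀ x : AlgebraicClosure ℚ_[q], aeval x (Fpoly r z s ℚ_[q]) = 0 →
      ∃ a, a ≠ 0 ∧ x = w * (a - a⁻¹) ∧ a ^ r - (a ^ r)⁻¹ = c := by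
    intro x hx
    obtain ⟨a, ha0, ha⟩ := exists_param (x / w)
    have hxa : x = w * (a - a⁻¹) := by rw [ha]; field_simp
    refine ⟨a, ha0, hxa, ?_⟩
    rw [hxa] at hx
    have := F_param r n hn z s hz0 w a hw ha0 hx
    rw [hcdef, eq_div_iff hwr0, mul_comm]; exact this
  obtain ⟨a, ha0, hγa, hac⟩ := par γ hγ
  obtain ⟨b₀, hb₀0, hγb₀, hbc₀⟩ := par γ' hγ'
  have har : a ^ r ≠ 0 := pow_ne_zero r ha0
  have hb : ∃ b, b ≠ 0 ∧ γ' = w * (b - b⁻¹) ∧ b ^ r = a ^ r := by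
    have hbr : b₀ ^ r ≠ 0 := pow_ne_zero r hb₀0
    have e : (b₀ ^ r - a ^ r) * (b₀ ^ r * a ^ r + 1) = 0 := by
      have : a ^ r - (a ^ r)⁻¹ = b₀ ^ r - (b₀ ^ r)⁻¹ := hac.trans hbc₀.symm
      field_simp at this
      linear_combination -this
    rcases mul_eq_zero.1 e with e | e
    · exact ⟨b₀, hb₀0, hγb₀, sub_eq_zero.1 e⟩
    · refine ⟨-b₀⁻¹, by simpa using hb₀0, ?_, ?_⟩
      · rw [hγb₀, inv_neg, inv_inv]; ring
      · rw [hodd.neg_pow, inv_pow]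
        field_simp
        linear_combination -e
  obtain ⟨b, hb0, hγb, hbr⟩ := hb
  have hab : a ≠ b := by rintro rfl; exact hne (hγa.trans hγb.symm)
  have hT : a ^ r * (a ^ r - c) = 1 := by
    rw [← hac, sub_sub_cancel, mul_inv_cancel₀ har]
  obtain ⟨d, hd, hres⟩ := V_core V (w := w) hrp hodd ha0 hb0 rfl hbr hT hc hV2 hab
  rw [← hγa, ← hγb, hV _ (sub_ne_zero.2 hne), hV w hw0, hvw] at hres
  have hrK : (r : AlgebraicClosure ℚ_[q]) ≠ 0 := by exact_mod_cast hrp.ne_zero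
  rw [hV _ hrK, hvnat r hrp.ne_zero] at hd
  cases d with
  | top => rw [add_top] at hres; exact absurd hres (WithTop.coe_ne_top)
  | coe d =>
    rw [← WithTop.coe_add] at hres
    rw [← WithTop.coe_nsmul] at hd
    have hres' := WithTop.coe_injective hres
    have hd' := WithTop.coe_injective hd
    rw [nsmul_eq_mul, Nat.cast_sub hrp.one_lt.le, Nat.cast_one] at hd'
    have hr5 : (5 : ℚ) ≤ r := by exact_mod_cast hr
    have hr1 : (r : ℚ) - 1 ≠ 0 := by linarith
    rw [hres']
    split_ifs with hqr
    · subst hqr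
      rw [padicValNat_self, Nat.cast_one] at hd'
      rw [eq_div_of_mul_eq hr1 ((mul_comm _ _).trans hd')]; ring
    · rw [padicValNat.eq_zero_of_not_dvd (fun hd => hqr ((Nat.prime_dvd_prime_iff_eq hqp hrp).1 hd))] at hd'
      have : d = 0 := by simpa [hr1] using hd'
      rw [this, add_zero]
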